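/- arXiv:2407.21187 — 3 statements merged into one kernel-verified Lean document; each statement's English description precedes it below -/
import Mathlib

section
/- For all real s ∈ [0, 1] and all real y ∈ [0, 1], one has (4s − 6s² − 2y + 4ys) · s · (1 − s) ≤ 0.155. -/
theorem stmt11_aux (s : ℝ) (hs0 : 0 ≤ s) (hs1 : s ≤ 1) :
    (4 * s - 6 * s ^ 2) * s * (1 - s) ≤ 0.155 := by
  have h1 : 0 ≤ 1 - s := by linarith
  have a := mul_nonneg (mul_nonneg (sq_nonneg (s - 0.3856)) hs0) h1
  have b := mul_nonneg (sq_nonneg (s - 0.3856)) hs0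
  have c := mul_nonneg (sq_nonneg (s - 0.3856)) h1
  norm_num at *
  nlinarith [a, b, c]

/-- For all `s ∈ [0,1]` and `y ∈ [0,1]`,
`(4s − 6s² − 2y + 4ys)·s·(1−s) ≤ 0.155`. -/
theorem stmt11 (s y : ℝ) (hs0 : 0 ≤ s) (hs1 : s ≤ 1) (hy0 : 0 ≤ y) (hy1 : y ≤ 1) :
    (4 * s - 6 * s ^ 2 - 2 * y + 4 * y * s) * s * (1 - s) ≤ 0.155 := by
  have h0 := stmt11_aux s hs0 hs1
  have h1 := stmt11_aux (1 - s) (by linarith) (by linarith)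
  have k0 := mul_le_mul_of_nonneg_left h0 (sub_nonneg.2 hy1)
  have k1 := mul_le_mul_of_nonneg_left h1 hy0
  linarith [k0, k1]
end

section
/- For every real y ∈ [0, 1] and every z ∈ ℝ, the second derivative of the function h(z) = (σ(z) − y)² satisfies h″(z) = (4 σ(z) − 6 σ(z)² − 2y + 4 y σ(z)) σ(z) (1 − σ(z)) ≤ 0.155. -/
/-- The logistic (sigmoid) function `σ(z) = 1/(1 + exp(−z))`. -/
noncomputable def sigmoid (z : ℝ) : ℝ := 1 / (1 + Real.exp (-z))

lemma aux_pos (z : ℝ) : 0 < sigmoid z ∧ sigmoid z < 1 := by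
  have h := Real.exp_pos (-z)
  unfold sigmoid
  refine ⟨by positivity, ?_⟩
  rw [div_lt_one (by positivity)]
  linarith

lemma aux_deriv (z : ℝ) : HasDerivAt sigmoid (sigmoid z * (1 - sigmoid z)) z := by
  have h : sigmoid = Real.sigmoid := by
    funext x
    simp [sigmoid, Real.sigmoid]
  rw [h]
  exact Real.hasDerivAt_sigmoid z

lemma aux_poly (t : ℝ) (h0 : 0 ≤ t) (h1 : t ≤ 1) :
    (4 * t - 6 * t ^ 2) * t * (1 - t) ≤ 0.155 := by
  have h2 : 0 ≤ 1 - t := by linarith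
  nlinarith [mul_nonneg (sq_nonneg (t - 0.3856)) (mul_nonneg h0 h2),
    mul_nonneg (sq_nonneg (t - 0.3856)) h0, mul_nonneg (sq_nonneg (t - 0.3856)) h2]

/-- For every `y ∈ [0,1]` and every `z ∈ ℝ`, the second
derivative of `h(z) = (σ(z) − y)²` satisfies
`h″(z) = (4σ(z) − 6σ(z)² − 2y + 4yσ(z))σ(z)(1 − σ(z)) ≤ 0.155`. -/
theorem stmt12 (y : ℝ) (hy0 : 0 ≤ y) (hy1 : y ≤ 1) (z : ℝ) :
    deriv (deriv fun z => (sigmoid z - y) ^ 2) z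
        = (4 * sigmoid z - 6 * sigmoid z ^ 2 - 2 * y + 4 * y * sigmoid z)
            * sigmoid z * (1 - sigmoid z) ∧
      (4 * sigmoid z - 6 * sigmoid z ^ 2 - 2 * y + 4 * y * sigmoid z)
          * sigmoid z * (1 - sigmoid z) ≤ 0.155 := by
  constructor
  · have h1 : (deriv fun z => (sigmoid z - y) ^ 2) =
        fun z => 2 * (sigmoid z - y) * (sigmoid z * (1 - sigmoid z)) := by
      funext x
      have h := ((aux_deriv x).sub_const y).pow 2
      refine HasDerivAt.deriv (h.congr_deriv ?_)
      simp
    rw [h1]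
    have d := aux_deriv z
    have h := ((d.sub_const y).const_mul 2).mul (d.mul (d.const_sub 1))
    refine HasDerivAt.deriv (h.congr_deriv ?_)
    simp only [Pi.mul_apply]
    ring
  · obtain ⟨h0, h1⟩ := aux_pos z
    generalize sigmoid z = s at *
    have a := aux_poly s h0.le h1.le
    have b := aux_poly (1 - s) (by linarith) (by linarith)
    have a' := mul_le_mul_of_nonneg_left a (sub_nonneg.2 hy1)
    have b' := mul_le_mul_of_nonneg_left b hy0
    linarith
end

section
/- Let x_1,…,x_n ∈ ℝ^{1+d}, let y_1,…,y_n ∈ [0,1], let z_1,…,z_n ∈ ℝ be arbitrary, and set Δ_i = (4 σ(z_i) − 6 σ(z_i)² − 2 y_i + 4 y_i σ(z_i)) σ(z_i) (1 − σ(z_i)). Then Σ_{i=1}^n Δ_i x_i x_iᵀ ≤ 0.155 · Σ_{i=1}^n x_i x_iᵀ = 0.155 · XᵀX in the Loewner order. In particular, each diagonal Hessian block of the LFFR loss L_2 (with targets in [0,1]) is bounded above in the Loewner order by 0.155 · XᵀX at every weight vector. -/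
open Matrix BigOperators

lemma aux_quartic (s : ℝ) (h0 : 0 ≤ s) (h1 : s ≤ 1) :
    (4 * s - 6 * s ^ 2) * s * (1 - s) ≤ 0.155 := by
  have a := mul_nonneg (sq_nonneg (s - 0.3856)) (mul_nonneg h0 (sub_nonneg.2 h1))
  have b := mul_nonneg (sq_nonneg (s - 0.3856)) h0
  have c := mul_nonneg (sq_nonneg (s - 0.3856)) (sub_nonneg.2 h1)
  norm_num at *
  nlinarith

lemma aux_scalar (s y : ℝ) (h0 : 0 ≤ s) (h1 : s ≤ 1) (y0 : 0 ≤ y) (y1 : y ≤ 1) :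
    (4 * s - 6 * s ^ 2 - 2 * y + 4 * y * s) * s * (1 - s) ≤ 0.155 := by
  have a := mul_le_mul_of_nonneg_left (aux_quartic s h0 h1) (sub_nonneg.2 y1)
  have b := mul_le_mul_of_nonneg_left
    (aux_quartic (1 - s) (sub_nonneg.2 h1) (by linarith)) y0
  have e : (4 * s - 6 * s ^ 2 - 2 * y + 4 * y * s) * s * (1 - s)
      = (1 - y) * ((4 * s - 6 * s ^ 2) * s * (1 - s))
        + y * ((4 * (1 - s) - 6 * (1 - s) ^ 2) * (1 - s) * (1 - (1 - s))) := by ring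
  rw [e]
  linarith

/-- With `yᵢ ∈ [0,1]`, arbitrary `zᵢ ∈ ℝ`, and
`Δᵢ = (4σ(zᵢ) − 6σ(zᵢ)² − 2yᵢ + 4yᵢσ(zᵢ))σ(zᵢ)(1 − σ(zᵢ))`, one has
`∑ᵢ Δᵢ xᵢxᵢᵀ ≤ 0.155 · ∑ᵢ xᵢxᵢᵀ = 0.155 · XᵀX` in the Loewner order. -/
theorem stmt14 (n d : ℕ) (x : Fin n → Fin (1 + d) → ℝ)
    (X : Matrix (Fin n) (Fin (1 + d)) ℝ) (hX : X = Matrix.of x)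
    (y z : Fin n → ℝ) (hy : ∀ i, y i ∈ Set.Icc (0 : ℝ) 1)
    (Δ : Fin n → ℝ)
    (hΔ : ∀ i, Δ i = (4 * sigmoid (z i) - 6 * sigmoid (z i) ^ 2 - 2 * y i
        + 4 * y i * sigmoid (z i)) * sigmoid (z i) * (1 - sigmoid (z i))) :
    Xᵀ * X = ∑ i, Matrix.vecMulVec (x i) (x i) ∧
      ((0.155 : ℝ) • (Xᵀ * X) - ∑ i, Δ i • Matrix.vecMulVec (x i) (x i)).PosSemidef := by
  have hsum : Xᵀ * X = ∑ i, Matrix.vecMulVec (x i) (x i) := by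
    subst hX
    ext a b
    simp [Matrix.mul_apply, Matrix.sum_apply, Matrix.vecMulVec_apply]
  refine ⟨hsum, ?_⟩
  rw [hsum, Finset.smul_sum, ← Finset.sum_sub_distrib]
  refine Matrix.posSemidef_sum _ fun i _ => ?_
  rw [← sub_smul]
  refine Matrix.PosSemidef.smul ?_ ?_
  · simpa using Matrix.posSemidef_vecMulVec_self_star (x i)
  · have hp := Real.exp_pos (-(z i))
    rw [hΔ i]
    refine sub_nonneg.2 (aux_scalar _ _ ?_ ?_ (hy i).1 (hy i).2)
    · unfold sigmoid; positivity
    · unfold sigmoid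
      rw [div_le_one (by positivity)]
      linarith
end
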